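/- For every n ∈ ℕ and all 0 ≤ i < j ≤ 2ℓ the following sum vanishes: Σ_{k=i}^{min(2ℓ, n+j)} (-1)^k q^{(2k+1)(k-i)+j(2k+1)+2k(2ℓ+n+1)-k²} · [(q²;q²)_k (q²;q²)_{k+i} / (q²;q²)_{2k}] · [(q^{-4ℓ};q²)_k (q^{-2j-2n};q²)_k / ((q²;q²)_k (q^{4ℓ+4};q²)_k)] · [(q^{-2k};q²)_{k-i} / (q²;q²)_{k-i}] · [(q^{2k+2};q²)_{n+j-k} / (q^{4k+4};q²)_{n+j-k}] · R_k(μ(j);1,1,q^{-2n-2j-2},q^{-4ℓ-2};q²) = 0. (This identity expresses the vanishing of the coefficient of x^{n+j-i} in the (i,j)-entry of P_n, so that each entry of P_n has degree at most n.) -/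

import Mathlib

open Finset Polynomial MeasureTheory Matrix
open scoped BigOperators ComplexOrder

noncomputable section

/-- q-shifted factorial `(a;p)_n`. -/
def qp (a p : ℂ) (n : ℕ) : ℂ := ∏ j ∈ Finset.range n, (1 - a * p ^ j)

/-- q-Racah polynomial `R_n(μ(x);α,β,γ,δ;p)`. -/
def qRacah (p α β γ δ : ℂ) (n x : ℕ) : ℂ :=
  ∑ k ∈ Finset.range (min n x + 1),
    qp (p ^ (-(n : ℤ))) p k * qp (α * β * p ^ (n + 1)) p k *
        qp (p ^ (-(x : ℤ))) p k * qp (γ * δ * p ^ (x + 1)) p k /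
      (qp (α * p) p k * qp (β * δ * p) p k * qp (γ * p) p k * qp p p k) * p ^ k

/-- `IsUltra C` says that for each base `p`, parameter `β` and degree `n`, `C p β n` is
the continuous q-ultraspherical polynomial: it has degree at most `n` and its values at
`(z+z⁻¹)/2` are given by the symmetric Laurent sum. -/
def IsUltra (C : ℂ → ℂ → ℕ → Polynomial ℂ) : Prop :=
  ∀ (p β : ℂ) (n : ℕ),
    (C p β n).degree ≤ (n : ℕ) ∧
      ∀ z : ℂ, z ≠ 0 →
        (C p β n).eval ((z + z⁻¹) / 2) =
          ∑ r ∈ Finset.range (n + 1),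
            qp β p r * qp β p (n - r) / (qp p p r * qp p p (n - r)) * z ^ ((n : ℤ) - 2 * r)

/-- The matrix-valued polynomial `P_n` (entries in `Polynomial ℂ`); here `L = 2ℓ`. -/
def Pm (q : ℂ) (L : ℕ) (C : ℂ → ℂ → ℕ → Polynomial ℂ) (n : ℕ) :
    Matrix (Fin (L + 1)) (Fin (L + 1)) (Polynomial ℂ) :=
  Matrix.of fun i j =>
    ∑ k ∈ Finset.Icc (i : ℕ) (min L (n + (j : ℕ))),
      Polynomial.C
          ((-1 : ℂ) ^ k *
            q ^ ((n : ℤ) + (2 * (k : ℤ) + 1) * ((k : ℤ) - ((i : ℕ) : ℤ)) +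
                ((j : ℕ) : ℤ) * (2 * (k : ℤ) + 1) + 2 * (k : ℤ) * ((L : ℤ) + (n : ℤ) + 1) -
                (k : ℤ) ^ 2) *
            (qp (q ^ 2) (q ^ 2) k * qp (q ^ 2) (q ^ 2) (k + (i : ℕ)) /
              (qp (q ^ 2) (q ^ 2) (2 * k) * qp (q ^ 2) (q ^ 2) (i : ℕ))) *
            (qp (q ^ (-(2 * (L : ℤ)))) (q ^ 2) k *
                qp (q ^ (-(2 * ((j : ℕ) : ℤ) + 2 * (n : ℤ)))) (q ^ 2) k /
              (qp (q ^ 2) (q ^ 2) k * qp (q ^ (2 * (L : ℤ) + 4)) (q ^ 2) k)) *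
            (qp (q ^ 2) (q ^ 2) (n + (j : ℕ) - k) /
              qp (q ^ (4 * (k : ℤ) + 4)) (q ^ 2) (n + (j : ℕ) - k)) *
            qRacah (q ^ 2) 1 1 (q ^ (-(2 * (n : ℤ) + 2 * ((j : ℕ) : ℤ) + 2)))
              (q ^ (-(2 * (L : ℤ) + 2))) k (j : ℕ)) *
        (C (q ^ 2) (q ^ (-(2 * (k : ℤ)))) (k - (i : ℕ)) *
          C (q ^ 2) (q ^ (2 * (k : ℤ) + 2)) (n + (j : ℕ) - k))

/-- Evaluation of the matrix-valued polynomial `P_n` at a point. -/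
def evP (q : ℂ) (L : ℕ) (C : ℂ → ℂ → ℕ → Polynomial ℂ) (n : ℕ) (x : ℂ) :
    Matrix (Fin (L + 1)) (Fin (L + 1)) ℂ :=
  (Pm q L C n).map (Polynomial.eval x)

/-- The coefficients `α_t(m,n)` of the weight. -/
def alphaC (q : ℂ) (L m n t : ℕ) : ℂ :=
  q ^ (2 * (n : ℤ) * ((L : ℤ) + 1) - (n : ℤ) ^ 2 - (2 * (L : ℤ) + 3) * (t : ℤ) + (t : ℤ) ^ 2 -
      (L : ℤ) + (m : ℤ)) *
    ((1 - q ^ (2 * (L : ℤ) + 2)) / (1 - q ^ (2 * (m : ℤ) + 2))) *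
    (qp (q ^ 2) (q ^ 2) (L - n) * qp (q ^ 2) (q ^ 2) n / qp (q ^ 2) (q ^ 2) L) *
    ((-1 : ℂ) ^ ((m : ℤ) - (t : ℤ)) * qp (q ^ (2 * (m : ℤ) - 2 * (L : ℤ))) (q ^ 2) (n - t) /
      qp (q ^ (2 * (m : ℤ) + 4)) (q ^ 2) (n - t)) *
    (qp (q ^ (2 * (L : ℤ) + 4 - 2 * (t : ℤ))) (q ^ 2) t / qp (q ^ 2) (q ^ 2) t)

/-- The matrix weight `W(x)`. -/
def Wm (q : ℂ) (L : ℕ) (x : ℂ) : Matrix (Fin (L + 1)) (Fin (L + 1)) ℂ :=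
  Matrix.of fun i j =>
    ∑ t ∈ Finset.range (max (i : ℕ) (j : ℕ) + 1),
      alphaC q L (min (i : ℕ) (j : ℕ)) (max (i : ℕ) (j : ℕ)) t *
        (Polynomial.Chebyshev.U ℂ
            ((min (i : ℕ) (j : ℕ) : ℤ) + (max (i : ℕ) (j : ℕ) : ℤ) - 2 * (t : ℤ))).eval x

/-- The antidiagonal involution `J`. -/
def Jm (L : ℕ) : Matrix (Fin (L + 1)) (Fin (L + 1)) ℂ :=
  Matrix.of fun i j => if (i : ℕ) + (j : ℕ) = L then 1 else 0

/-- The diagonal leading-coefficient matrix `Γ_n`. -/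
def Gam (q : ℂ) (L n : ℕ) : Matrix (Fin (L + 1)) (Fin (L + 1)) ℂ :=
  Matrix.diagonal fun i =>
    2 ^ n * q ^ n * qp (q ^ (2 * ((i : ℕ) : ℤ) + 2)) (q ^ 2) n *
        qp (q ^ (2 * (L : ℤ) - 2 * ((i : ℕ) : ℤ) + 2)) (q ^ 2) n /
      (qp (q ^ 2) (q ^ 2) n * qp (q ^ (2 * (L : ℤ) + 4)) (q ^ 2) n)

/-- The squared-norm matrix `G_m`. -/
def Gmat (q : ℂ) (L m : ℕ) : Matrix (Fin (L + 1)) (Fin (L + 1)) ℂ :=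
  Matrix.diagonal fun i =>
    q ^ (2 * (m : ℤ) - (L : ℤ)) * (1 - q ^ (2 * (L : ℤ) + 2)) ^ 2 /
      ((1 - q ^ (2 * (m : ℤ) + 2 * ((i : ℕ) : ℤ) + 2)) *
        (1 - q ^ (2 * (L : ℤ) - 2 * ((i : ℕ) : ℤ) + 2 * (m : ℤ) + 2)))

/-- The unipotent lower triangular matrix `L(x)` of the LDU decomposition. -/
def Lm (q : ℂ) (L : ℕ) (C : ℂ → ℂ → ℕ → Polynomial ℂ) (x : ℂ) :
    Matrix (Fin (L + 1)) (Fin (L + 1)) ℂ :=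
  Matrix.of fun m k =>
    if (k : ℕ) ≤ (m : ℕ) then
      q ^ (((m : ℕ) : ℤ) - ((k : ℕ) : ℤ)) * qp (q ^ 2) (q ^ 2) (m : ℕ) *
          qp (q ^ 2) (q ^ 2) (2 * (k : ℕ) + 1) /
          (qp (q ^ 2) (q ^ 2) ((m : ℕ) + (k : ℕ) + 1) * qp (q ^ 2) (q ^ 2) (k : ℕ)) *
        (C (q ^ 2) (q ^ (2 * (k : ℕ) + 2)) ((m : ℕ) - (k : ℕ))).eval x
    else 0

/-- The claimed inverse of `L(x)`. -/
def Linv (q : ℂ) (L : ℕ) (C : ℂ → ℂ → ℕ → Polynomial ℂ) (x : ℂ) :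
    Matrix (Fin (L + 1)) (Fin (L + 1)) ℂ :=
  Matrix.of fun k n =>
    if (n : ℕ) ≤ (k : ℕ) then
      q ^ ((2 * ((k : ℕ) : ℤ) + 1) * (((k : ℕ) : ℤ) - ((n : ℕ) : ℤ))) *
          qp (q ^ 2) (q ^ 2) (k : ℕ) * qp (q ^ 2) (q ^ 2) ((k : ℕ) + (n : ℕ)) /
          (qp (q ^ 2) (q ^ 2) (2 * (k : ℕ)) * qp (q ^ 2) (q ^ 2) (n : ℕ)) *
        (C (q ^ 2) (q ^ (-(2 * ((k : ℕ) : ℤ)))) ((k : ℕ) - (n : ℕ))).eval x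
    else 0

/-- The constants `c_k(ℓ)`. -/
def ckC (q : ℂ) (L k : ℕ) : ℂ :=
  q ^ (-(L : ℤ)) / 4 * (1 - q ^ (4 * k + 2)) * qp (q ^ 2) (q ^ 2) (L + k + 1) *
      qp (q ^ 2) (q ^ 2) (L - k) * qp (q ^ 2) (q ^ 2) k ^ 4 /
    (qp (q ^ 2) (q ^ 2) (2 * k + 1) ^ 2 * qp (q ^ 2) (q ^ 2) L ^ 2)

/-- The diagonal part `T(x)` of the LDU decomposition. -/
def Tm (q : ℂ) (L : ℕ) (x : ℂ) : Matrix (Fin (L + 1)) (Fin (L + 1)) ℂ :=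
  Matrix.diagonal fun k =>
    ckC q L (k : ℕ) *
      (4 * ∏ j ∈ Finset.Icc 1 (k : ℕ), (1 - 2 * (2 * x ^ 2 - 1) * q ^ (2 * j) + q ^ (4 * j)))

/-- The coefficient matrix `M₁(z)` of the q-difference operator `D₁`. -/
def M1f (q : ℂ) (L : ℕ) (z : ℂ) : Matrix (Fin (L + 1)) (Fin (L + 1)) ℂ :=
  Matrix.of fun i j =>
    if (j : ℕ) = (i : ℕ) + 1 then
      -(q ^ (1 - ((i : ℕ) : ℤ)) * (1 - q ^ (2 * (i : ℕ) + 2)) / (1 - q ^ 2) ^ 2 *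
        (z / (1 - z ^ 2)))
    else if (j : ℕ) = (i : ℕ) then
      q ^ (1 - ((i : ℕ) : ℤ)) / (1 - q ^ 2) ^ 2 *
        ((1 - q ^ (2 * (i : ℕ) + 2) * z ^ 2) / (1 - z ^ 2))
    else 0

/-- `M₂(z) = J M₁(z) J`. -/
def M2f (q : ℂ) (L : ℕ) (z : ℂ) : Matrix (Fin (L + 1)) (Fin (L + 1)) ℂ :=
  Jm L * M1f q L z * Jm L

/-- The eigenvalue matrix `Λ_n(1)`. -/
def Lam1 (q : ℂ) (L n : ℕ) : Matrix (Fin (L + 1)) (Fin (L + 1)) ℂ :=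
  Matrix.diagonal fun j =>
    (q ^ (-((j : ℕ) : ℤ) - (n : ℤ) - 1) + q ^ (((j : ℕ) : ℤ) + (n : ℤ) + 1)) / (q⁻¹ - q) ^ 2

/-- The eigenvalue matrix `Λ_n(2) = J Λ_n(1) J`. -/
def Lam2 (q : ℂ) (L n : ℕ) : Matrix (Fin (L + 1)) (Fin (L + 1)) ℂ :=
  Jm L * Lam1 q L n * Jm L

/-- The diagonal coefficient matrix `K₁(z)` of the decoupled operator. -/
def K1f (q : ℂ) (L : ℕ) (z : ℂ) : Matrix (Fin (L + 1)) (Fin (L + 1)) ℂ :=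
  Matrix.diagonal fun i =>
    q ^ (1 - ((i : ℕ) : ℤ)) / (1 - q ^ 2) ^ 2 *
      ((1 - q ^ (2 * (i : ℕ) + 2) * z ^ 2) / (1 - z ^ 2))

/-- The symmetric Laurent polynomial `Ĉ_k(z;β|p)`. -/
def Chat (p β : ℂ) (k : ℕ) (z : ℂ) : ℂ :=
  ∑ r ∈ Finset.range (k + 1),
    qp β p r * qp β p (k - r) / (qp p p r * qp p p (k - r)) * z ^ ((k : ℤ) - 2 * (r : ℤ))

/-- The matrix polynomials `R_n(x) = L(x)ᵀ P_n(x) Γ_n⁻¹`. -/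
def Rmat (q : ℂ) (L : ℕ) (C : ℂ → ℂ → ℕ → Polynomial ℂ) (n : ℕ) (x : ℂ) :
    Matrix (Fin (L + 1)) (Fin (L + 1)) ℂ :=
  (Lm q L C x)ᵀ * evP q L C n x * (Gam q L n)⁻¹



lemma qp_succ (a p : ℂ) (n : ℕ) : qp a p (n + 1) = qp a p n * (1 - a * p ^ n) := by
  simp [qp, Finset.prod_range_succ]

lemma qp_zero (a p : ℂ) : qp a p 0 = 1 := by simp [qp]

lemma qp_succ' (a p : ℂ) (n : ℕ) : qp a p (n + 1) = (1 - a) * qp (a * p) p n := by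
  simp only [qp, Finset.prod_range_succ', pow_zero, mul_one]
  rw [mul_comm]
  congr 1
  refine Finset.prod_congr rfl fun j _ => ?_
  ring

def phi (p : ℂ) (m : ℕ) (X : ℂ) : ℂ := qp X⁻¹ p m * qp (X * p) p m
def Bf (p a b X : ℂ) : ℂ := (1 - a * X * p) * (1 - b * X * p) * (1 - X * p) / ((1 - X ^ 2 * p) * (1 + X * p))
def Df (p a b X : ℂ) : ℂ := p * (1 - X) * (b - X) * (a - X) / ((1 + X) * (1 - X ^ 2 * p))
def Af (p a b : ℂ) (f : ℂ → ℂ) (X : ℂ) : ℂ :=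
  Bf p a b X * (f (X * p) - f X) + Df p a b X * (f (X / p) - f X)
def epsf (p a b : ℂ) (m : ℕ) : ℂ := (1 - p ^ m) * (1 - a * b * p ^ (m + 1)) / p ^ m
def cf (p a b : ℂ) (m : ℕ) : ℂ := -((1 - p ^ m) ^ 2 * (1 - a * p ^ m) * (1 - b * p ^ m) / p ^ m)
def Wf (p a b : ℂ) (k : ℕ) : ℂ :=
  (1 - p ^ (2 * k + 1)) * qp (a * p) p k * qp (b * p) p k /
    ((a * b * p) ^ k * (qp (p / a) p k * qp (p / b) p k))
def aR (p a b : ℂ) (j m : ℕ) : ℂ :=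
  qp (p ^ (-(j : ℤ))) p m * qp (a * b * p ^ (j + 1)) p m /
      (qp p p m * qp (b * p) p m * qp (a * p) p m * qp p p m) * p ^ m
def RR (p a b : ℂ) (j : ℕ) (X : ℂ) : ℂ := ∑ m ∈ Finset.range (j + 1), aR p a b j m * phi p m X

lemma Af_phi_zero (p a b X : ℂ) : Af p a b (phi p 0) X = 0 := by
  simp [Af, phi, qp_zero]

lemma Af_phi_succ (p a b X : ℂ) (m : ℕ) (hp : p ≠ 0) (hX : X ≠ 0) (h1 : 1 + X ≠ 0)
    (h2 : 1 + X * p ≠ 0) (h3 : 1 - X ^ 2 * p ≠ 0) :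
    Af p a b (phi p (m + 1)) X = epsf p a b (m + 1) * phi p (m + 1) X
      + cf p a b (m + 1) * phi p m X := by
  have hm : p ^ m ≠ 0 := pow_ne_zero _ hp
  rcases m with _ | m
  · simp only [Af, Bf, Df, epsf, cf, phi, qp_succ, qp_zero]
    field_simp
    ring
  · have hm : p ^ m ≠ 0 := pow_ne_zero _ hp
    have e1 : phi p (m + 1 + 1) X = (1 - X⁻¹) * (1 - X⁻¹ * p * p ^ m) * (1 - X * p) * (1 - X * p * p * p ^ m) *
        (qp (X⁻¹ * p) p m * qp (X * p * p) p m) := by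
      simp only [phi]
      rw [qp_succ', qp_succ, qp_succ' (X * p), qp_succ]; ring
    have e2 : phi p (m + 1) X = (1 - X⁻¹) * (1 - X * p) *
        (qp (X⁻¹ * p) p m * qp (X * p * p) p m) := by
      simp only [phi]
      rw [qp_succ', qp_succ' (X * p)]; ring
    have e3 : phi p (m + 1 + 1) (X * p) = (1 - X⁻¹ * p⁻¹) * (1 - X⁻¹) * (1 - X * p * p * p ^ m) *
        (1 - X * p * p * p ^ (m + 1)) * (qp (X⁻¹ * p) p m * qp (X * p * p) p m) := by
      simp only [phi]
      rw [qp_succ', qp_succ', qp_succ (X * p * p), qp_succ,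
        show (X * p)⁻¹ * p = X⁻¹ by field_simp, mul_inv]; ring
    have e4 : phi p (m + 1 + 1) (X / p) = (1 - X⁻¹ * p * p ^ m) * (1 - X⁻¹ * p * p ^ (m + 1)) * (1 - X) *
        (1 - X * p) * (qp (X⁻¹ * p) p m * qp (X * p * p) p m) := by
      simp only [phi]
      rw [show X / p * p = X by field_simp, show (X / p)⁻¹ = X⁻¹ * p by field_simp,
        qp_succ, qp_succ, qp_succ' X, qp_succ' (X * p)]; ring
    simp only [Af]
    rw [e3, e4, e1, e2]
    generalize qp (X⁻¹ * p) p m * qp (X * p * p) p m = E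
    simp only [Bf, Df, epsf, cf, pow_succ]
    generalize p ^ m = M at *
    field_simp
    ring

lemma aR_succ (p a b : ℂ) (j m : ℕ) (hp : p ≠ 0) (h1 : 1 - p ^ (m + 1) ≠ 0)
    (ha : 1 - a * p ^ (m + 1) ≠ 0) (hb : 1 - b * p ^ (m + 1) ≠ 0) :
    aR p a b j (m + 1) * cf p a b (m + 1) = aR p a b j m * (epsf p a b j - epsf p a b m) := by
  have hm : p ^ m ≠ 0 := pow_ne_zero _ hp
  have hj : p ^ j ≠ 0 := pow_ne_zero _ hp
  simp only [aR, qp_succ]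
  have e : (qp p p m * (1 - p * p ^ m) * (qp (b * p) p m * (1 - b * p * p ^ m)) *
        (qp (a * p) p m * (1 - a * p * p ^ m)) * (qp p p m * (1 - p * p ^ m))) =
      (qp p p m * qp (b * p) p m * qp (a * p) p m * qp p p m) *
        ((1 - p ^ (m+1)) ^ 2 * (1 - a * p ^ (m+1)) * (1 - b * p ^ (m+1))) := by ring
  rw [e]
  generalize (qp p p m * qp (b * p) p m * qp (a * p) p m * qp p p m) = Q
  generalize qp (p ^ (-(j : ℤ))) p m = Q1
  generalize qp (a * b * p ^ (j + 1)) p m = Q2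
  simp only [cf, epsf, _root_.zpow_neg, zpow_natCast]
  rw [mul_comm Q, ← div_div]
  field_simp
  ring

lemma Af_RR (p a b X : ℂ) (j : ℕ) (hp : p ≠ 0) (hX : X ≠ 0) (h1 : 1 + X ≠ 0)
    (h2 : 1 + X * p ≠ 0) (h3 : 1 - X ^ 2 * p ≠ 0)
    (h4 : ∀ m < j, 1 - p ^ (m + 1) ≠ 0 ∧ 1 - a * p ^ (m + 1) ≠ 0 ∧ 1 - b * p ^ (m + 1) ≠ 0) :
    Af p a b (RR p a b j) X = epsf p a b j * RR p a b j X := by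
  have e : Af p a b (RR p a b j) X =
      ∑ m ∈ Finset.range (j + 1), aR p a b j m * Af p a b (phi p m) X := by
    simp only [Af, RR, ← Finset.sum_sub_distrib, Finset.mul_sum, ← Finset.sum_add_distrib]
    exact Finset.sum_congr rfl fun m _ => by ring
  have key : ∀ t ≤ j, ∑ m ∈ Finset.range (t + 1), aR p a b j m * Af p a b (phi p m) X =
      epsf p a b j * (∑ m ∈ Finset.range (t + 1), aR p a b j m * phi p m X)
        - aR p a b j t * (epsf p a b j - epsf p a b t) * phi p t X := by
    intro t ht
    induction t with
    | zero =>
      simp [Af_phi_zero, epsf]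
      ring
    | succ t ih =>
      rw [Finset.sum_range_succ, ih (by omega), Finset.sum_range_succ _ (t + 1),
        Af_phi_succ p a b X t hp hX h1 h2 h3]
      obtain ⟨x, y, z⟩ := h4 t (by omega)
      have := aR_succ p a b j t hp x y z
      rw [← this]
      ring
  rw [e, key j le_rfl, RR]
  ring

lemma Wf_succ (p a b : ℂ) (k : ℕ) (hp : p ≠ 0) (ha : a ≠ 0) (hb : b ≠ 0)
    (h1 : 1 - p ^ (2 * k + 1) ≠ 0) (h2 : 1 - p ^ (2 * k + 3) ≠ 0) (h3 : 1 + p ^ (k + 1) ≠ 0)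
    (h4 : 1 - p / a * p ^ k ≠ 0) (h5 : 1 - p / b * p ^ k ≠ 0) :
    Wf p a b (k + 1) * Df p a b (p ^ (k + 1)) = Wf p a b k * Bf p a b (p ^ k) := by
  simp only [Wf, qp_succ]
  have e : (a * b * p) ^ (k + 1) * (qp (p / a) p k * (1 - p / a * p ^ k) * (qp (p / b) p k * (1 - p / b * p ^ k)))
    = ((a * b * p) ^ k * (qp (p / a) p k * qp (p / b) p k)) * (p * (a - p ^ (k+1)) * (b - p ^ (k+1))) := by
    field_simp
    ring
  have h4' : a - p ^ (k+1) ≠ 0 := by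
    intro h; apply h4; rw [show a = p ^ (k+1) by linear_combination h]; field_simp; ring
  have h5' : b - p ^ (k+1) ≠ 0 := by
    intro h; apply h5; rw [show b = p ^ (k+1) by linear_combination h]; field_simp; ring
  rw [e]
  generalize ((a * b * p) ^ k * (qp (p / a) p k * qp (p / b) p k)) = Q
  generalize qp (a * p) p k = Q1
  generalize qp (b * p) p k = Q2
  simp only [Bf, Df]
  rw [mul_comm Q, ← div_div]
  have a1 : 1 - (p ^ k) ^ 2 * p ≠ 0 := by convert h1 using 2; ring
  have a2 : 1 - (p ^ (k + 1)) ^ 2 * p ≠ 0 := by convert h2 using 2; ring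
  have a3 : 1 + p ^ k * p ≠ 0 := by rwa [pow_succ] at h3
  rw [show p ^ (2 * (k + 1) + 1) = (p ^ (k+1)) ^ 2 * p by ring, show p ^ (2 * k + 1) = (p ^ k)^2 * p by ring]
  simp only [pow_succ p k] at *
  generalize p ^ k = X at *
  have a4 : 1 - X ^ 2 * p ^ 3 ≠ 0 := by convert a2 using 2; ring
  field_simp

lemma telescope (p a b : ℂ) (M : ℕ) (hp : p ≠ 0)
    (hW : ∀ k, Wf p a b (k + 1) * Df p a b (p ^ (k + 1)) = Wf p a b k * Bf p a b (p ^ k))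
    (hM : Bf p a b (p ^ M) = 0) (g h : ℂ → ℂ) :
    ∑ k ∈ Finset.range (M + 1), Wf p a b k *
      (h (p ^ k) * Af p a b g (p ^ k) - g (p ^ k) * Af p a b h (p ^ k)) = 0 := by
  have key : ∀ t, ∑ k ∈ Finset.range t, Wf p a b k *
      (h (p ^ k) * Af p a b g (p ^ k) - g (p ^ k) * Af p a b h (p ^ k)) =
      Wf p a b t * Df p a b (p ^ t) * (h (p ^ t / p) * g (p ^ t) - g (p ^ t / p) * h (p ^ t)) := by
    intro t
    induction t with
    | zero => simp [Df]
    | succ t ih =>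
      rw [Finset.sum_range_succ, ih, hW, show p ^ (t + 1) / p = p ^ t by field_simp; ring]
      simp only [Af, pow_succ]
      ring
  rw [key, hW, hM]
  ring

lemma main_orth (p a b : ℂ) (M i j : ℕ) (hp : p ≠ 0) (ha : a ≠ 0) (hb : b ≠ 0)
    (hp1 : ∀ k : ℕ, 1 - p ^ (k + 1) ≠ 0) (hp2 : ∀ k : ℕ, 1 + p ^ k ≠ 0)
    (ha1 : ∀ k : ℕ, 1 - p / a * p ^ k ≠ 0) (hb1 : ∀ k : ℕ, 1 - p / b * p ^ k ≠ 0)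
    (hM : Bf p a b (p ^ M) = 0)
    (h4 : ∀ m < j, 1 - a * p ^ (m + 1) ≠ 0 ∧ 1 - b * p ^ (m + 1) ≠ 0)
    (h5 : ∀ i < j, epsf p a b j - epsf p a b i ≠ 0) (hij : i < j) :
    ∑ k ∈ Finset.range (M + 1), Wf p a b k * (phi p i (p ^ k) * RR p a b j (p ^ k)) = 0 := by
  have hW : ∀ k, Wf p a b (k + 1) * Df p a b (p ^ (k + 1)) = Wf p a b k * Bf p a b (p ^ k) :=
    fun k => Wf_succ p a b k hp ha hb (hp1 _) (hp1 _) (hp2 _) (ha1 _) (hb1 _)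
  have hX : ∀ k : ℕ, p ^ k ≠ 0 := fun k => pow_ne_zero _ hp
  have hX2 : ∀ k : ℕ, 1 + p ^ k * p ≠ 0 := fun k => by rw [← pow_succ]; exact hp2 _
  have hX3 : ∀ k : ℕ, 1 - (p ^ k) ^ 2 * p ≠ 0 := fun k => by
    rw [← pow_mul, ← pow_succ]; exact hp1 _
  have hR : ∀ k : ℕ, Af p a b (RR p a b j) (p ^ k) = epsf p a b j * RR p a b j (p ^ k) :=
    fun k => Af_RR p a b _ j hp (hX k) (hp2 k) (hX2 k) (hX3 k)
      fun m hm => ⟨hp1 m, h4 m hm⟩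
  induction i with
  | zero =>
    have := telescope p a b M hp hW hM (RR p a b j) (phi p 0)
    simp only [hR, Af_phi_zero] at this
    have e0 : epsf p a b 0 = 0 := by simp [epsf]
    have h50 := h5 0 hij
    rw [e0] at h50
    refine (mul_eq_zero.mp (?_ : (epsf p a b j - 0) * _ = 0)).resolve_left h50
    refine Eq.trans ?_ this
    rw [Finset.mul_sum]
    exact Finset.sum_congr rfl fun k _ => by ring
  | succ i ih =>
    have := telescope p a b M hp hW hM (RR p a b j) (phi p (i + 1))
    have hA := fun k => Af_phi_succ p a b (p ^ k) i hp (hX k) (hp2 k) (hX2 k) (hX3 k)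
    simp only [hR, hA] at this
    refine (mul_eq_zero.mp (?_ : (epsf p a b j - epsf p a b (i + 1)) * _ = 0)).resolve_left (h5 _ hij)
    have ih' := ih (by omega)
    have e0 := congrArg (fun z => cf p a b (i + 1) * z) ih'
    simp only [mul_zero] at e0
    refine Eq.trans ?_ this
    rw [← sub_zero (_ * _), ← e0, Finset.mul_sum, Finset.mul_sum, ← Finset.sum_sub_distrib]
    exact Finset.sum_congr rfl fun k _ => by ring

lemma qp_shift (p : ℂ) (h : ∀ k : ℕ, 1 - p ^ (k + 1) ≠ 0) (a b : ℕ) :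
    qp (p ^ (a + 1)) p b = qp p p (a + b) / qp p p a := by
  have hF : qp p p a ≠ 0 := by
    rw [qp]; exact Finset.prod_ne_zero_iff.mpr fun j _ => by rw [← pow_succ']; exact h j
  rw [eq_div_iff hF]
  induction b with
  | zero => simp [qp_zero]
  | succ b ih =>
    rw [qp_succ, ← Nat.add_assoc, qp_succ, ← ih]
    ring

lemma qp_refl (q : ℂ) (hq : q ≠ 0) (h : ∀ k : ℕ, 1 - (q ^ 2) ^ (k + 1) ≠ 0) (i d : ℕ) :
    qp ((q ^ 2) ^ (-((i + d : ℕ) : ℤ))) (q ^ 2) d =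
      (-1) ^ d * q ^ (-((d : ℤ) * (d + 1)) - 2 * i * d) * qp (q ^ 2) (q ^ 2) (i + d) / qp (q ^ 2) (q ^ 2) i := by
  have hF : qp (q ^ 2) (q ^ 2) i ≠ 0 := by
    rw [qp]; exact Finset.prod_ne_zero_iff.mpr fun j _ => by rw [← pow_succ']; exact h j
  rw [eq_div_iff hF]
  induction d with
  | zero => simp [qp_zero]
  | succ d ih =>
    have hp : (q ^ 2) ≠ 0 := pow_ne_zero _ hq
    rw [qp_succ', ← Nat.add_assoc, qp_succ (q ^ 2)]
    have e : (q ^ 2) ^ (-((i + d + 1 : ℕ) : ℤ)) * q ^ 2 = (q ^ 2) ^ (-((i + d : ℕ) : ℤ)) := by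
      rw [← zpow_add_one₀ hp]; congr 1; push_cast; ring
    rw [e, mul_assoc, ih]
    have e2 : (q ^ (-(((d + 1 : ℕ) : ℤ) * ((d + 1 : ℕ) + 1)) - 2 * i * (d + 1 : ℕ)) : ℂ) =
      q ^ (-((d : ℤ) * (d + 1)) - 2 * i * d) * ((q ^ 2) ^ (i + d + 1))⁻¹ := by
      rw [← zpow_natCast, ← zpow_natCast, ← _root_.zpow_mul, ← _root_.zpow_neg, ← zpow_add₀ hq]
      congr 1; push_cast; ring
    rw [e2, _root_.zpow_neg, zpow_natCast]
    have h3 : (q ^ 2) ^ (i + d + 1) ≠ 0 := pow_ne_zero _ hp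
    have e3 : q ^ 2 * (q ^ 2) ^ (i + d) = (q ^ 2) ^ (i + d + 1) := by ring
    rw [e3]
    generalize (q ^ 2) ^ (i + d + 1) = Y at *
    field_simp
    ring

lemma phi_zero (p : ℂ) (hp : p ≠ 0) (m k : ℕ) (h : k < m) : phi p m (p ^ k) = 0 := by
  rw [phi, qp, Finset.prod_eq_zero (Finset.mem_range.mpr h), zero_mul]
  rw [inv_mul_cancel₀ (pow_ne_zero _ hp), sub_self]

lemma qRacah_eq (p a b : ℂ) (hp : p ≠ 0) (k j : ℕ) :
    qRacah p 1 1 a b k j = RR p a b j (p ^ k) := by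
  rw [RR, qRacah]
  have : ∀ m ∈ Finset.range (j + 1), m ∉ Finset.range (min k j + 1) →
      aR p a b j m * phi p m (p ^ k) = 0 := by
    intro m h1 h2
    simp only [Finset.mem_range] at h1 h2
    rw [phi_zero p hp m k (by omega), mul_zero]
  rw [← Finset.sum_subset (Finset.range_subset_range.mpr (by omega)) this]
  refine Finset.sum_congr rfl fun m _ => ?_
  simp only [aR, phi, one_mul, _root_.zpow_neg, zpow_natCast, pow_succ]
  ring_nf

lemma final_alg (s1 s2 z1 z2 z3 z4 z5 F1 F2 F3 F4 F5 F6 F7 F8 G H H1 H2 : ℂ)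
    (A10 : z1 * z2 = z3 * z4 * z5) (hF1 : F1 ≠ 0) (hF2 : F2 ≠ 0) (hF6 : F6 ≠ 0) :
    s1 * z1 * (F1 * F8 / F2) * (H1 * H2 / (F1 * H)) * (s2 * z2 * F1 / F3 / F4) *
      (F5 / F1 / (F7 / (F2 * G))) =
    z3 * F5 / (F3 * F6) * (G * H2 * H1 / (z4⁻¹ * (F7 / F6 * H)) *
      (s1 * s2 * z5 * F1 / F4 * (F8 / F1))) := by
  have e1 := mul_inv_cancel₀ hF1
  have e2 := mul_inv_cancel₀ hF2
  have e6 := mul_inv_cancel₀ hF6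
  simp only [div_eq_mul_inv, mul_inv, inv_inv]
  generalize F1⁻¹ = f1 at *
  generalize F2⁻¹ = f2 at *
  generalize F6⁻¹ = f6 at *
  generalize F3⁻¹ = f3 at *
  generalize F4⁻¹ = f4 at *
  generalize F7⁻¹ = f7 at *
  generalize H⁻¹ = h at *
  trans (F1 * f1) ^ 2 * (F2 * f2) * ((s1 * s2) * (z1 * z2) * F8 * H1 * H2 * F5 * G * f3 * f4 * f7 * h)
  · ring
  · rw [e1, e2, A10]
    trans (F1 * f1) * (F6 * f6) * ((s1 * s2) * (z3 * z4 * z5) * F8 * H1 * H2 * F5 * G * f3 * f4 * f7 * h)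
    · rw [e1, e6]; ring
    · ring

/-- vanishing of the coefficient of `x^{n+j-i}` in the `(i,j)`-entry of
`P_n` for `i < j`. -/
theorem stmt10 (q : ℝ) (hq0 : 0 < q) (hq1 : q < 1) (L : ℕ)
    (n i j : ℕ) (hij : i < j) (hj : j ≤ L) :
    ∑ k ∈ Finset.Icc i (min L (n + j)),
        (-1 : ℂ) ^ k *
            (q : ℂ) ^ ((2 * (k : ℤ) + 1) * ((k : ℤ) - (i : ℤ)) + (j : ℤ) * (2 * (k : ℤ) + 1) +
                2 * (k : ℤ) * ((L : ℤ) + (n : ℤ) + 1) - (k : ℤ) ^ 2) *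
            (qp ((q : ℂ) ^ 2) ((q : ℂ) ^ 2) k * qp ((q : ℂ) ^ 2) ((q : ℂ) ^ 2) (k + i) /
              qp ((q : ℂ) ^ 2) ((q : ℂ) ^ 2) (2 * k)) *
            (qp ((q : ℂ) ^ (-(2 * (L : ℤ)))) ((q : ℂ) ^ 2) k *
                qp ((q : ℂ) ^ (-(2 * (j : ℤ) + 2 * (n : ℤ)))) ((q : ℂ) ^ 2) k /
              (qp ((q : ℂ) ^ 2) ((q : ℂ) ^ 2) k *
                qp ((q : ℂ) ^ (2 * (L : ℤ) + 4)) ((q : ℂ) ^ 2) k)) *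
            (qp ((q : ℂ) ^ (-(2 * (k : ℤ)))) ((q : ℂ) ^ 2) (k - i) /
              qp ((q : ℂ) ^ 2) ((q : ℂ) ^ 2) (k - i)) *
            (qp ((q : ℂ) ^ (2 * (k : ℤ) + 2)) ((q : ℂ) ^ 2) (n + j - k) /
              qp ((q : ℂ) ^ (4 * (k : ℤ) + 4)) ((q : ℂ) ^ 2) (n + j - k)) *
            qRacah ((q : ℂ) ^ 2) 1 1 ((q : ℂ) ^ (-(2 * (n : ℤ) + 2 * (j : ℤ) + 2)))
              ((q : ℂ) ^ (-(2 * (L : ℤ) + 2))) k j =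
      0 := by
  have hQ : (q : ℂ) ≠ 0 := by exact_mod_cast hq0.ne'
  have hp1 : ∀ k : ℕ, 1 - ((q : ℂ) ^ 2) ^ (k + 1) ≠ 0 := by
    intro k h
    have h1 : (q ^ 2) ^ (k + 1) < 1 := pow_lt_one₀ (by positivity) (by nlinarith) (by omega)
    have h2 : 1 - (q ^ 2) ^ (k + 1) = 0 := by exact_mod_cast h
    linarith
  have hp2 : ∀ k : ℕ, 1 + ((q : ℂ) ^ 2) ^ k ≠ 0 := by
    intro k h
    have h1 : 0 < (q ^ 2) ^ k := by positivity
    have h2 : 1 + (q ^ 2) ^ k = 0 := by exact_mod_cast h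
    linarith
  generalize (q : ℂ) = Q at *
  have hp : Q ^ 2 ≠ 0 := pow_ne_zero _ hQ
  have hpk : ∀ k : ℕ, (Q ^ 2) ^ k ≠ 0 := fun k => pow_ne_zero _ hp
  have hF : ∀ k : ℕ, qp (Q ^ 2) (Q ^ 2) k ≠ 0 := fun k => by
    rw [qp]; exact Finset.prod_ne_zero_iff.mpr fun j _ => by rw [← pow_succ']; exact hp1 j
  have hz : ∀ (z : ℤ) (m : ℕ), z = 2 * m → Q ^ z = (Q ^ 2) ^ m := by
    rintro z m rfl
    rw [← zpow_natCast, ← zpow_natCast, ← _root_.zpow_mul]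
    norm_cast
  have hzn : ∀ (z : ℤ) (m : ℕ), z = -(2 * m) → Q ^ z = ((Q ^ 2) ^ m)⁻¹ := by
    rintro z m rfl
    rw [_root_.zpow_neg, hz _ m rfl]
  have ea : Q ^ (-(2 * (n : ℤ) + 2 * (j : ℤ) + 2)) = ((Q ^ 2) ^ (n + j + 1))⁻¹ :=
    hzn _ _ (by push_cast; ring)
  have eb : Q ^ (-(2 * (L : ℤ) + 2)) = ((Q ^ 2) ^ (L + 1))⁻¹ :=
    hzn _ _ (by push_cast; ring)
  rw [ea, eb]
  have hinv : ∀ u v t : ℕ, u = v + t + 1 → 1 - ((Q ^ 2) ^ u)⁻¹ * (Q ^ 2) ^ v ≠ 0 := by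
    rintro u v t rfl h
    apply hp1 t
    have h1 := hpk v
    have h2 := hpk t
    have : (Q ^ 2) ^ (v + t + 1) = (Q ^ 2) ^ v := by
      rw [sub_eq_zero, inv_mul_eq_div, eq_div_iff (hpk _)] at h
      simpa using h
    have h3 : (Q ^ 2) ^ v * (1 - (Q ^ 2) ^ (t + 1)) = 0 := by
      linear_combination -this
    exact (mul_eq_zero.mp h3).resolve_left h1
  have hinv2 : ∀ u k : ℕ, 1 - Q ^ 2 / ((Q ^ 2) ^ (u + 1))⁻¹ * (Q ^ 2) ^ k ≠ 0 := by
    intro u k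
    convert hp1 (u + k + 1) using 2
    rw [div_inv_eq_mul]
    ring
  have orth := main_orth (Q ^ 2) ((Q ^ 2) ^ (n + j + 1))⁻¹ ((Q ^ 2) ^ (L + 1))⁻¹
    (min L (n + j)) i j hp (inv_ne_zero (hpk _)) (inv_ne_zero (hpk _)) hp1 hp2
    (hinv2 _) (hinv2 _)
    (by
      rcases min_choice L (n + j) with h | h <;> rw [h, Bf]
      · rw [mul_assoc ((Q ^ 2) ^ (L + 1))⁻¹, ← pow_succ, inv_mul_cancel₀ (hpk _)]
        simp
      · rw [mul_assoc ((Q ^ 2) ^ (n + j + 1))⁻¹, ← pow_succ, inv_mul_cancel₀ (hpk _)]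
        simp)
    (fun m hm => ⟨hinv _ _ (n + j - m - 1) (by omega), hinv _ _ (L - m - 1) (by omega)⟩)
    (by
      intro i' hi'
      obtain ⟨d, rfl⟩ : ∃ d, j = i' + d + 1 := ⟨j - i' - 1, by omega⟩
      have h1 := hp1 d
      have h2 := hinv (n + (i' + d + 1) + 1 + (L + 1)) (i' + (i' + d + 1) + 1) (n + L - i') (by omega)
      rw [pow_add (Q ^ 2) (n + (i' + d + 1) + 1), mul_inv] at h2
      have e : epsf (Q ^ 2) ((Q ^ 2) ^ (n + (i' + d + 1) + 1))⁻¹ ((Q ^ 2) ^ (L + 1))⁻¹ (i' + d + 1)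
          - epsf (Q ^ 2) ((Q ^ 2) ^ (n + (i' + d + 1) + 1))⁻¹ ((Q ^ 2) ^ (L + 1))⁻¹ i' =
          (1 - (Q ^ 2) ^ (d + 1)) * (1 - ((Q ^ 2) ^ (n + (i' + d + 1) + 1))⁻¹ * ((Q ^ 2) ^ (L + 1))⁻¹
            * (Q ^ 2) ^ (i' + (i' + d + 1) + 1)) / (Q ^ 2) ^ (i' + d + 1) := by
        generalize ((Q ^ 2) ^ (n + (i' + d + 1) + 1))⁻¹ = a
        generalize ((Q ^ 2) ^ (L + 1))⁻¹ = b
        generalize Q ^ 2 = p at *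
        simp only [epsf]
        field_simp
        ring
      rw [e]
      exact div_ne_zero (mul_ne_zero h1 h2) (hpk _))
    hij
  have hsub : Finset.Icc i (min L (n + j)) ⊆ Finset.range (min L (n + j) + 1) := by
    intro x hx
    simp only [Finset.mem_Icc, Finset.mem_range] at *
    omega
  rw [← Finset.sum_subset hsub (by
    intro k h1 h2
    simp only [Finset.mem_Icc, Finset.mem_range] at h1 h2
    rw [phi_zero _ hp i k (by omega)]; ring)] at orth
  have orth2 := congrArg (fun z => Q ^ ((i : ℤ) + j) * qp (Q ^ 2) (Q ^ 2) (n + j) /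
    (qp (Q ^ 2) (Q ^ 2) i * qp (Q ^ 2) (Q ^ 2) (n + j + 1)) * z) orth
  simp only [mul_zero] at orth2
  rw [← orth2, Finset.mul_sum]
  refine Finset.sum_congr rfl fun k hk => ?_
  simp only [Finset.mem_Icc, le_min_iff] at hk
  obtain ⟨hk1, hk2, hk3⟩ := hk
  rw [qRacah_eq _ _ _ hp]
  generalize RR (Q ^ 2) ((Q ^ 2) ^ (n + j + 1))⁻¹ ((Q ^ 2) ^ (L + 1))⁻¹ j ((Q ^ 2) ^ k) = R
  rw [← mul_assoc (Wf _ _ _ _), ← mul_assoc]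
  congr 1
  obtain ⟨d, rfl⟩ : ∃ d, k = i + d := ⟨k - i, by omega⟩
  obtain ⟨N, hN⟩ : ∃ N, N = n + j := ⟨_, rfl⟩
  rw [← hN] at hk3 ⊢
  obtain ⟨e, rfl⟩ : ∃ e, N = i + d + e := ⟨N - (i + d), by omega⟩
  have n1 : (n : ℤ) = i + d + e - j := by omega
  have A1 : Q ^ (-(2 * (L : ℤ))) = ((Q ^ 2) ^ (L + 1))⁻¹ * Q ^ 2 := by
    rw [hzn _ L rfl]; have := hpk L; rw [pow_succ (Q ^ 2) L]; field_simp
  have A2 : Q ^ (-(2 * (j : ℤ) + 2 * (n : ℤ))) = ((Q ^ 2) ^ (i + d + e + 1))⁻¹ * Q ^ 2 := by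
    rw [hzn _ (i + d + e) (by push_cast; omega)]
    have := hpk (i + d + e); rw [pow_succ (Q ^ 2) (i + d + e)]; field_simp
  have A3 : Q ^ (2 * (L : ℤ) + 4) = Q ^ 2 / ((Q ^ 2) ^ (L + 1))⁻¹ := by
    rw [hz _ (L + 2) (by push_cast; ring), div_inv_eq_mul]; ring
  have A4 : Q ^ (-(2 * ((i + d : ℕ) : ℤ))) = (Q ^ 2) ^ (-((i + d : ℕ) : ℤ)) := by
    rw [hzn _ (i + d) rfl, _root_.zpow_neg, zpow_natCast]
  have A5 : Q ^ (2 * ((i + d : ℕ) : ℤ) + 2) = (Q ^ 2) ^ (i + d + 1) := hz _ _ (by push_cast; ring)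
  have A6 : Q ^ (4 * ((i + d : ℕ) : ℤ) + 4) = (Q ^ 2) ^ (2 * (i + d) + 1 + 1) :=
    hz _ _ (by push_cast; ring)
  have A7 : Q ^ 2 / ((Q ^ 2) ^ (i + d + e + 1))⁻¹ = (Q ^ 2) ^ (i + d + e + 1 + 1) := by
    rw [div_inv_eq_mul]; ring
  rw [show i + d - i = d by omega, show i + d + e - (i + d) = e by omega]
  rw [A1, A2, A3, A4, A5, A6, Wf, A7, qp_refl Q hQ hp1, qp_shift _ hp1, qp_shift _ hp1,
    qp_shift _ hp1, phi, ← pow_succ, qp_shift _ hp1]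
  have A8 : (((Q ^ 2) ^ (i + d))⁻¹) = (Q ^ 2) ^ (-((d + i : ℕ) : ℤ)) := by
    rw [_root_.zpow_neg, zpow_natCast, add_comm d i]
  rw [A8, qp_refl Q hQ hp1,
    show 2 * (i + d) + 1 + e = i + d + e + 1 + (i + d) by ring, qp_succ _ _ (2 * (i + d)),
    ← pow_succ', add_comm d i]
  have A9 : (((Q ^ 2) ^ (i + d + e + 1))⁻¹ * ((Q ^ 2) ^ (L + 1))⁻¹ * Q ^ 2) ^ (i + d) =
      Q ^ (-(2 * (i + d : ℤ) * (i + d + e + L + 1))) := by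
    rw [show -(2 * (i + d : ℤ) * (i + d + e + L + 1)) =
      (-(2 * (i + d + e + L + 1 : ℕ)) : ℤ) * ((i + d : ℕ) : ℤ) by push_cast; ring,
      _root_.zpow_mul, zpow_natCast, hzn _ (i + d + e + L + 1) rfl]
    congr 1
    have h1 := hpk (i + d + e + 1)
    have h2 := hpk (L + 1)
    have h3 := hpk (i + d + e + L + 1)
    field_simp
    ring
  rw [A9, _root_.zpow_neg Q (2 * (i + d : ℤ) * (i + d + e + L + 1))]
  have A10 : Q ^ ((2 * ((i + d : ℕ) : ℤ) + 1) * (((i + d : ℕ) : ℤ) - (i : ℤ)) + (j : ℤ) * (2 * ((i + d : ℕ) : ℤ) + 1) +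
                2 * ((i + d : ℕ) : ℤ) * ((L : ℤ) + (n : ℤ) + 1) - ((i + d : ℕ) : ℤ) ^ 2) *
      Q ^ (-((d : ℤ) * (d + 1)) - 2 * i * d) =
      Q ^ ((i : ℤ) + j) * Q ^ (2 * (i + d : ℤ) * (i + d + e + L + 1)) *
        Q ^ (-((i : ℤ) * (i + 1)) - 2 * d * i) := by
    rw [← zpow_add₀ hQ, ← zpow_add₀ hQ, ← zpow_add₀ hQ, n1]
    congr 1
    push_cast
    ring
  have A11 : ((-1 : ℂ)) ^ (i + d) * (-1) ^ d = (-1) ^ i := by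
    rw [pow_add, mul_assoc, ← mul_pow]; simp
  have hF1 := hF (i + d)
  have hF2 := hF (2 * (i + d))
  have hF3 := hF i
  have hF4 := hF d
  have hF5 := hF (i + d + e)
  have hF6 := hF (i + d + e + 1)
  have hF7 := hF (i + d + e + 1 + (i + d))
  have hq1 := hp1 (2 * (i + d))
  have hq2 := hp1 (i + d + e)
  generalize Q ^ ((2 * ((i + d : ℕ) : ℤ) + 1) * (((i + d : ℕ) : ℤ) - (i : ℤ)) + (j : ℤ) * (2 * ((i + d : ℕ) : ℤ) + 1) +
                2 * ((i + d : ℕ) : ℤ) * ((L : ℤ) + (n : ℤ) + 1) - ((i + d : ℕ) : ℤ) ^ 2) = z1 at *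
  generalize Q ^ (-((d : ℤ) * (d + 1)) - 2 * i * d) = z2 at *
  generalize Q ^ ((i : ℤ) + j) = z3 at *
  generalize Q ^ (2 * (i + d : ℤ) * (i + d + e + L + 1)) = z4 at *
  generalize Q ^ (-((i : ℤ) * (i + 1)) - 2 * d * i) = z5 at *
  generalize ((-1 : ℂ)) ^ (i + d) = s1 at *
  generalize ((-1 : ℂ)) ^ d = s2 at *
  generalize ((-1 : ℂ)) ^ i = s3 at *
  rw [show i + d + i = d + i + i by ring]
  simp only [show d + i = i + d by ring]
  generalize qp (Q ^ 2) (Q ^ 2) (i + d + e + 1 + (i + d)) = F7 at *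
  generalize qp (Q ^ 2) (Q ^ 2) (i + d + e + 1) = F6 at *
  generalize qp (Q ^ 2) (Q ^ 2) (i + d + e) = F5 at *
  generalize qp (Q ^ 2) (Q ^ 2) (i + d + i) = F8 at *
  generalize qp (Q ^ 2) (Q ^ 2) (2 * (i + d)) = F2 at *
  generalize qp (Q ^ 2) (Q ^ 2) (i + d) = F1 at *
  generalize qp (Q ^ 2) (Q ^ 2) i = F3 at *
  generalize qp (Q ^ 2) (Q ^ 2) d = F4 at *
  generalize 1 - (Q ^ 2) ^ (2 * (i + d) + 1) = G at *
  generalize qp (Q ^ 2 / ((Q ^ 2) ^ (L + 1))⁻¹) (Q ^ 2) (i + d) = H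
  generalize qp (((Q ^ 2) ^ (L + 1))⁻¹ * Q ^ 2) (Q ^ 2) (i + d) = H1
  generalize qp (((Q ^ 2) ^ (i + d + e + 1))⁻¹ * Q ^ 2) (Q ^ 2) (i + d) = H2
  rw [← A11]
  exact final_alg _ _ _ _ _ _ _ _ _ _ _ _ _ _ _ _ _ _ _ A10 hF1 hF2 hF6

end
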